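/- arXiv:2309.13499 — 5 statements merged into one kernel-verified Lean document; each statement's English description precedes it below -/
import Mathlib

section
/- (Theorem 1: compositionality for acyclic cluster interconnections.) Assume: (DAG) the cluster interconnection relation R is acyclic, i.e., for every k ∈ K, ¬ Relation.TransGen R k k; (i) for every agent i ∈ I, the pair (w i, x̄ᵢ) weakly satisfies the contract (A i, G i), i.e., for every t ≥ 0, whenever w i (s) ∈ A i (s) for all s ∈ [0,t] then x̄ᵢ(s) ∈ G i (s) for all s ∈ [0,t]; (ii) for every i ∈ I and every t ≥ 0, every tuple p ∈ ∏_{j∈N(i)} ℝ^{n j} with p j ∈ Proj^j(G j (t)) for all j ∈ N(i) belongs to A i (t). Then for every s ≥ 0 and every i ∈ I, x̄ᵢ(s) ∈ G i (s); i.e., the global trajectory satisfies the composed contract whose guarantee is the product over clusters of the intersections of the member agents' guarantees. -/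
/-- Theorem 1: compositionality for acyclic cluster interconnections.
Agents `i : I` have states `x i`, adversarial neighbor sets `N i`, and a cluster
assignment `κ : I → K`.  The internal input of agent `i` at time `s` is the tuple of its
neighbors' states, and the cluster tuple of agent `i` is the tuple of states of the agents
in its cluster.  If the cluster interconnection relation `R` is acyclic, every agent weakly
satisfies its contract `(A i, G i)`, and assumptions are implied by the neighbors'
projected guarantees, then every agent's cluster tuple satisfies its guarantee at all
times `s ≥ 0`. -/
theorem compositionality_acyclic
    {I K : Type*} [Fintype I]
    (n : I → ℕ)
    (x : ∀ i : I, ℝ → (Fin (n i) → ℝ))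
    (N : I → Set I)
    (κ : I → K)
    (A : ∀ i : I, ℝ → Set (∀ j : N i, Fin (n j) → ℝ))
    (G : ∀ i : I, ℝ → Set (∀ j : {j : I // κ j = κ i}, Fin (n j) → ℝ))
    -- (DAG) the cluster interconnection relation is acyclic
    (hdag : ∀ k : K, ¬ Relation.TransGen
      (fun k' k => ∃ i j : I, κ i = k ∧ j ∈ N i ∧ κ j = k') k k)
    -- (i) every agent weakly satisfies its contract
    (hweak : ∀ i : I, ∀ t : ℝ, 0 ≤ t →
      (∀ s ∈ Set.Icc (0:ℝ) t, (fun j : N i => x j s) ∈ A i s) →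
      ∀ s ∈ Set.Icc (0:ℝ) t, (fun j : {j : I // κ j = κ i} => x j s) ∈ G i s)
    -- (ii) neighbors' projected guarantees imply the assumptions
    (hcompat : ∀ i : I, ∀ t : ℝ, 0 ≤ t →
      ∀ pvec : ∀ j : N i, Fin (n j) → ℝ,
        (∀ j : N i, ∃ q ∈ G (j : I) t, q ⟨(j : I), rfl⟩ = pvec j) →
        pvec ∈ A i t) :
    ∀ s : ℝ, 0 ≤ s → ∀ i : I,
      (fun j : {j : I // κ j = κ i} => x j s) ∈ G i s := by
  let r : I → I → Prop := fun j i => Relation.TransGen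
      (fun k' k => ∃ i j : I, κ i = k ∧ j ∈ N i ∧ κ j = k') (κ j) (κ i)
  haveI : IsTrans I r := ⟨fun _ _ _ h1 h2 => Relation.TransGen.trans h1 h2⟩
  haveI : Std.Irrefl r := ⟨fun i h => hdag (κ i) h⟩
  have wf : WellFounded r := Finite.wellFounded_of_trans_of_irrefl r
  have key : ∀ i : I, ∀ s : ℝ, 0 ≤ s →
      (fun j : {j : I // κ j = κ i} => x j s) ∈ G i s := by
    intro i
    induction i using wf.induction with
    | _ i ih =>
      intro s hs
      refine hweak i s hs (fun u hu => ?_) s ⟨hs, le_refl s⟩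
      refine hcompat i u hu.1 _ (fun j => ?_)
      exact ⟨_, ih j (Relation.TransGen.single ⟨i, j, rfl, j.2, rfl⟩) u hu.1, rfl⟩
  exact fun s hs i => key i s hs
end

section
/- (Theorem 2: compositionality for general, possibly cyclic, interconnections under uniform strong satisfaction.) Assume: (i) for every i ∈ I, x i (0) ∈ Proj^i(G i (0)); (ii) for every agent i ∈ I, the pair (w i, x̄ᵢ) uniformly strongly satisfies the contract (A i, G i), i.e., there exists δ i > 0 such that for every t ≥ 0, whenever w i (s) ∈ A i (s) for all s ∈ [0,t] then x̄ᵢ(s) ∈ G i (s) for all s ∈ [0, t+δ i]; (iii) for every i ∈ I and every t ≥ 0, every tuple p ∈ ∏_{j∈N(i)} ℝ^{n j} with p j ∈ Proj^j(G j (t)) for all j ∈ N(i) belongs to A i (t). Then for every s ≥ 0 and every i ∈ I, x̄ᵢ(s) ∈ G i (s); i.e., the global trajectory satisfies the composed contract whose guarantee is the product over clusters of the intersections of the member agents' guarantees. -/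
/-- Theorem 2: compositionality for general (possibly cyclic) interconnections under
uniform strong satisfaction.  If (i) every agent's initial state lies in the projection
of its guarantee, (ii) every agent uniformly strongly satisfies its contract
`(A i, G i)`, and (iii) assumptions are implied by the neighbors' projected guarantees,
then every agent's cluster tuple satisfies its guarantee at all times `s ≥ 0`. -/
theorem compositionality_cyclic
    {I K : Type*} [Fintype I]
    (n : I → ℕ)
    (x : ∀ i : I, ℝ → (Fin (n i) → ℝ))
    (N : I → Set I)
    (κ : I → K)
    (A : ∀ i : I, ℝ → Set (∀ j : N i, Fin (n j) → ℝ))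
    (G : ∀ i : I, ℝ → Set (∀ j : {j : I // κ j = κ i}, Fin (n j) → ℝ))
    -- (i) initial states lie in the projections of the guarantees
    (hinit : ∀ i : I, ∃ q ∈ G i 0, q ⟨i, rfl⟩ = x i 0)
    -- (ii) every agent uniformly strongly satisfies its contract
    (hstrong : ∀ i : I, ∃ δ : ℝ, 0 < δ ∧ ∀ t : ℝ, 0 ≤ t →
      (∀ s ∈ Set.Icc (0:ℝ) t, (fun j : N i => x j s) ∈ A i s) →
      ∀ s ∈ Set.Icc (0:ℝ) (t + δ),
        (fun j : {j : I // κ j = κ i} => x j s) ∈ G i s)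
    -- (iii) neighbors' projected guarantees imply the assumptions
    (hcompat : ∀ i : I, ∀ t : ℝ, 0 ≤ t →
      ∀ pvec : ∀ j : N i, Fin (n j) → ℝ,
        (∀ j : N i, ∃ q ∈ G (j : I) t, q ⟨(j : I), rfl⟩ = pvec j) →
        pvec ∈ A i t) :
    ∀ s : ℝ, 0 ≤ s → ∀ i : I,
      (fun j : {j : I // κ j = κ i} => x j s) ∈ G i s := by
  choose δ hδ hst using hstrong
  obtain ⟨d, hd, hdle⟩ : ∃ d : ℝ, 0 < d ∧ ∀ i, d ≤ δ i := by
    rcases isEmpty_or_nonempty I with h | h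
    · exact ⟨1, one_pos, fun i => (h.false i).elim⟩
    · obtain ⟨i₀, hi₀⟩ := Finite.exists_min δ
      exact ⟨δ i₀, hδ i₀, hi₀⟩
  have step : ∀ t : ℝ, 0 ≤ t →
      (∀ s ∈ Set.Icc (0:ℝ) t, ∀ i, ∃ q ∈ G i s, q ⟨i, rfl⟩ = x i s) →
      ∀ s ∈ Set.Icc (0:ℝ) (t + d), ∀ i,
        (fun j : {j : I // κ j = κ i} => x j s) ∈ G i s := by
    intro t ht h s hs i
    refine hst i t ht (fun r hr => ?_) s ⟨hs.1, hs.2.trans (by linarith [hdle i])⟩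
    exact hcompat i r hr.1 _ (fun j => h r hr j)
  have key : ∀ k : ℕ, ∀ s ∈ Set.Icc (0:ℝ) (k * d), ∀ i,
      ∃ q ∈ G i s, q ⟨i, rfl⟩ = x i s := by
    intro k
    induction k with
    | zero =>
      intro s hs i
      have h0 : s = 0 := le_antisymm (by simpa using hs.2) hs.1
      subst h0
      exact hinit i
    | succ k ih =>
      intro s hs i
      refine ⟨_, step (k * d) (by positivity) ih s ⟨hs.1, ?_⟩ i, rfl⟩
      have := hs.2
      push_cast at this
      linarith
  intro s hs i
  obtain ⟨k, hk⟩ := exists_nat_ge (s / d)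
  have hk' : s ≤ k * d := (div_le_iff₀ hd).1 hk
  exact step (k * d) (by positivity) (key k) s ⟨hs, by linarith⟩ i
end

section
/- (Proposition 2: from weak to uniformly strong satisfaction, per trajectory.) Assume w is uniformly continuous on [0,∞) and let ε > 0. Suppose the pair (w, y) weakly satisfies the relaxed contract (B_ε(A), G): for every t ≥ 0, if w(s) ∈ B_ε(A)(s) for all s ∈ [0,t], then y(s) ∈ G(s) for all s ∈ [0,t]. Then (w, y) uniformly strongly satisfies the contract (A, G): there exists δ > 0 such that for every t ≥ 0, if w(s) ∈ A(s) for all s ∈ [0,t], then y(s) ∈ G(s) for all s ∈ [0, t+δ]. -/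
/-- Proposition 2: from weak to uniformly strong satisfaction (per trajectory).
If `w` is uniformly continuous on `[0,∞)` and the pair `(w, y)` weakly satisfies the
relaxed contract `(B_ε(A), G)` for some `ε > 0`, then `(w, y)` uniformly strongly
satisfies the contract `(A, G)`. -/
theorem weak_to_uniform_strong
    {W : Type*} [MetricSpace W] {Y : Type*}
    (w : ℝ → W) (y : ℝ → Y)
    (A : ℝ → Set W) (G : ℝ → Set Y)
    (hw : UniformContinuousOn w (Set.Ici 0))
    (ε : ℝ) (hε : 0 < ε)
    (hweak : ∀ t : ℝ, 0 ≤ t →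
      (∀ s ∈ Set.Icc (0:ℝ) t,
        w s ∈ {z : W | ∃ t' : ℝ, 0 ≤ t' ∧ |t' - s| ≤ ε ∧ ∃ a ∈ A t', dist z a ≤ ε}) →
      ∀ s ∈ Set.Icc (0:ℝ) t, y s ∈ G s) :
    ∃ δ : ℝ, 0 < δ ∧ ∀ t : ℝ, 0 ≤ t →
      (∀ s ∈ Set.Icc (0:ℝ) t, w s ∈ A s) →
      ∀ s ∈ Set.Icc (0:ℝ) (t + δ), y s ∈ G s := by
  obtain ⟨η, hη, h⟩ := Metric.uniformContinuousOn_iff.1 hw ε hε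
  have hm : 0 < min ε η := lt_min hε hη
  have h1 := min_le_left ε η
  have h2 := min_le_right ε η
  refine ⟨min ε η / 2, by linarith, fun t ht hA => hweak _ (by linarith) ?_⟩
  rintro s ⟨hs0, hs⟩
  by_cases hst : s ≤ t
  · refine ⟨s, hs0, ?_, w s, hA s ⟨hs0, hst⟩, ?_⟩
    · simpa using hε.le
    · simpa using hε.le
  · have hst' : t < s := not_le.1 hst
    refine ⟨t, ht, ?_, w t, hA t ⟨ht, le_refl t⟩, ?_⟩
    · rw [abs_le]
      constructor <;> linarith
    · refine (h s hs0 t ht ?_).le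
      rw [Real.dist_eq, abs_lt]
      constructor <;> linarith
end

section
/- (Transformed-error dynamics, equation (7) of the paper.) Let e, γ : ℝ → ℝ and t ∈ ℝ, and suppose e has derivative e' at t, γ has derivative g' at t, γ(t) > 0, and −1 < e(t)/γ(t) < 0. Set ê := e(t)/γ(t), J := −1/(γ(t)·ê·(1+ê)), and α := −g'/γ(t). Then the transformed error s ↦ ln((e(s)+γ(s))/(−e(s))) (which equals ln(−(ê(s)+1)/ê(s)) for ê(s) = e(s)/γ(s)) has derivative at t equal to J·(e' + α·e(t)). -/
/-- Transformed-error dynamics (equation (7)): if `e` has derivative `e'` at `t`, `γ` has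
derivative `g'` at `t`, `γ t > 0` and the modulated error `ê = e t / γ t` lies in
`(-1,0)`, then the transformed error `s ↦ ln((e s + γ s)/(-e s))` has derivative at `t`
equal to `J·(e' + α·e t)`, where `J = -1/(γ t · ê · (1+ê))` and `α = -g'/γ t`. -/
theorem transformed_error_dynamics
    (e γ : ℝ → ℝ) (t e' g' : ℝ)
    (he : HasDerivAt e e' t)
    (hγ : HasDerivAt γ g' t)
    (hγpos : 0 < γ t)
    (hlow : -1 < e t / γ t)
    (hhigh : e t / γ t < 0) :
    HasDerivAt (fun s => Real.log ((e s + γ s) / (-(e s))))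
      ((-1 / (γ t * (e t / γ t) * (1 + e t / γ t))) * (e' + (-g' / γ t) * e t)) t := by
  have h1 : e t < 0 := by
    rw [div_lt_iff₀ hγpos] at hhigh
    linarith
  have h2 : 0 < e t + γ t := by
    rw [lt_div_iff₀ hγpos] at hlow
    linarith
  have hn : e t ≠ 0 := h1.ne
  have hn2 : e t + γ t ≠ 0 := h2.ne'
  have hg : γ t ≠ 0 := hγpos.ne'
  have hn3 : -(e t) ≠ 0 := neg_ne_zero.mpr hn
  have hJ : γ t * (e t / γ t) * (1 + e t / γ t) = e t * (e t + γ t) / γ t := by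
    field_simp
    ring
  have key := ((he.add hγ).div he.neg hn3).log (div_ne_zero hn2 hn3)
  refine key.congr_deriv ?_
  rw [hJ]
  simp only [Pi.add_apply, Pi.neg_apply, Pi.div_apply]
  field_simp
  ring
end

section
/- (Funnel-based satisfaction of the eventually-always operator.) Let 0 ≤ a ≤ b, 0 ≤ ā ≤ b̄, r > 0, ρ^max ∈ ℝ, γ : ℝ → ℝ nonincreasing on [0,∞), and h : ℝ → ℝ. Suppose there exists t* ∈ [a+ā, b+ā] with γ(t*) ≤ ρ^max − r, and ρ^max − γ(t) < h(t) < ρ^max for all t ≥ 0. Then the robust semantics of F_{[a,b]}G_{[ā,b̄]} satisfies r ≤ sup{ inf{ h(t₂) | t₂ ∈ [t₁+ā, t₁+b̄] } | t₁ ∈ [a,b] } ≤ ρ^max; in particular it is strictly positive. -/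
/-- Funnel-based satisfaction of the eventually-always operator: with `0 ≤ a ≤ b`,
`0 ≤ ā ≤ b̄`, a nonincreasing funnel `γ` on `[0,∞)` such that `γ(t*) ≤ ρ^max − r` for
some `t* ∈ [a+ā, b+ā]`, and a robustness signal `h` staying in the funnel
`(ρ^max − γ(t), ρ^max)` for all `t ≥ 0`, the robust semantics
`sup_{t₁∈[a,b]} inf_{t₂∈[t₁+ā, t₁+b̄]} h(t₂)` lies in `[r, ρ^max]`, and in particular is
strictly positive. -/
theorem funnel_eventually_always_operator
    (a b abar bbar r ρmax : ℝ) (γ h : ℝ → ℝ)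
    (ha : 0 ≤ a) (hab : a ≤ b) (habar : 0 ≤ abar) (habbar : abar ≤ bbar)
    (hr : 0 < r)
    (hγmono : AntitoneOn γ (Set.Ici 0))
    (hγ : ∃ tstar ∈ Set.Icc (a + abar) (b + abar), γ tstar ≤ ρmax - r)
    (hfunnel : ∀ t : ℝ, 0 ≤ t → ρmax - γ t < h t ∧ h t < ρmax) :
    r ≤ sSup ((fun t₁ => sInf (h '' Set.Icc (t₁ + abar) (t₁ + bbar))) '' Set.Icc a b) ∧
    sSup ((fun t₁ => sInf (h '' Set.Icc (t₁ + abar) (t₁ + bbar))) '' Set.Icc a b) ≤ ρmax ∧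
    0 < sSup ((fun t₁ => sInf (h '' Set.Icc (t₁ + abar) (t₁ + bbar))) '' Set.Icc a b) := by
  have hup : ∀ t₁ ∈ Set.Icc a b, sInf (h '' Set.Icc (t₁ + abar) (t₁ + bbar)) ≤ ρmax := by
    intro t₁ ht₁
    have h0 : 0 ≤ t₁ + abar := by linarith [ht₁.1]
    have hbdd : BddBelow (h '' Set.Icc (t₁ + abar) (t₁ + bbar)) := by
      refine ⟨ρmax - γ 0, ?_⟩
      rintro _ ⟨t, ht, rfl⟩
      have ht0 : 0 ≤ t := h0.trans ht.1
      have h1 := hγmono (Set.mem_Ici.2 le_rfl) (Set.mem_Ici.2 ht0) ht0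
      have h2 := (hfunnel t ht0).1
      linarith
    have hmem : h (t₁ + abar) ∈ h '' Set.Icc (t₁ + abar) (t₁ + bbar) :=
      ⟨t₁ + abar, ⟨le_rfl, by linarith⟩, rfl⟩
    exact (csInf_le hbdd hmem).trans (hfunnel _ h0).2.le
  have key : r ≤ sSup ((fun t₁ => sInf (h '' Set.Icc (t₁ + abar) (t₁ + bbar))) '' Set.Icc a b) := by
    obtain ⟨s, hs, hsγ⟩ := hγ
    have hmem : s - abar ∈ Set.Icc a b := ⟨by linarith [hs.1], by linarith [hs.2]⟩
    have hs0 : 0 ≤ s := by linarith [hs.1]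
    refine le_trans ?_ (le_csSup ?_ (Set.mem_image_of_mem _ hmem))
    · refine le_csInf ((Set.nonempty_Icc.2 (by linarith)).image _) ?_
      rintro _ ⟨t, ht, rfl⟩
      have hst : s ≤ t := by linarith [ht.1]
      have h1 := hγmono (Set.mem_Ici.2 hs0) (Set.mem_Ici.2 (hs0.trans hst)) hst
      have h2 := (hfunnel t (hs0.trans hst)).1
      linarith
    · refine ⟨ρmax, ?_⟩
      rintro _ ⟨t, ht, rfl⟩
      exact hup t ht
  refine ⟨key, ?_, hr.trans_le key⟩
  refine csSup_le ((Set.nonempty_Icc.2 hab).image _) ?_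
  rintro _ ⟨t, ht, rfl⟩
  exact hup t ht
end
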